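/- The volume of the regular ideal tetrahedron, v_tet = 3Λ(π/3), satisfies |3Λ(π/3) − 1.014941| < 10⁻⁶. -/

import Mathlib

open Real MeasureTheory

/-- The Lobachevsky function `Λ(θ) = −∫₀^θ log |2 sin t| dt`. -/
noncomputable def lob (θ : ℝ) : ℝ := - ∫ t in (0:ℝ)..θ, Real.log |2 * Real.sin t|

/-! Euler's product `sinc θ = ∏ (1 - θ² / (mπ)²)` turns `log |2 sin t|` into `log (2t)` minus a
power series whose coefficients come from the sums `∑ (mπ)⁻²ᵏ = ζ(2k) / π²ᵏ`, which are rational.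
Integrating term by term gives Milnor's series
`Λ(θ) = θ (1 - log (2θ)) + ∑ ζ(2k) π⁻²ᵏ θ²ᵏ⁺¹ / (k (2k + 1))`. At `θ = π / 3` it converges like
`9⁻ᵏ`, and five terms already determine `3Λ(π/3)` up to `2 · 10⁻⁷`. -/

open Finset Filter Topology

/-- The sum of the `2k`-th inverse powers of the positive zeros `(m + 1)π` of `sinc`; it equals
`ζ(2k) / π ^ (2k)` and governs the expansion of `log ∘ sinc` at `0`. For `k = 0` the series diverges
and the value is the junk value `0`. -/
noncomputable def invZeroPowSum (k : ℕ) : ℝ :=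
  ∑' m : ℕ, 1 / ((m + 1) * π) ^ (2 * k)

lemma hasSum_one_div_succ_mul_pi_pow {k : ℕ} (hk : k ≠ 0) :
    HasSum (fun m : ℕ ↦ 1 / ((m + 1) * π) ^ (2 * k))
      ((-1) ^ (k + 1) * 2 ^ (2 * k - 1) * bernoulli (2 * k) / (2 * k).factorial) := by
  have h := ((hasSum_nat_add_iff' 1).2 (hasSum_zeta_nat hk)).div_const (π ^ (2 * k))
  have hπ : π ^ (2 * k) ≠ 0 := by positivity
  convert! h using 1
  · ext m
    rw [mul_pow, ← div_div]
    push_cast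
    rfl
  · rw [sum_range_one, Nat.cast_zero, zero_pow (by lia), div_zero, sub_zero]
    field_simp

lemma hasSum_invZeroPowSum {k : ℕ} (hk : k ≠ 0) :
    HasSum (fun m : ℕ ↦ 1 / ((m + 1) * π) ^ (2 * k)) (invZeroPowSum k) :=
  (hasSum_one_div_succ_mul_pi_pow hk).summable.hasSum

lemma invZeroPowSum_eq_bernoulli {k : ℕ} (hk : k ≠ 0) :
    invZeroPowSum k =
      (-1) ^ (k + 1) * 2 ^ (2 * k - 1) * bernoulli (2 * k) / (2 * k).factorial :=
  (hasSum_one_div_succ_mul_pi_pow hk).tsum_eq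

lemma invZeroPowSum_nonneg (k : ℕ) : 0 ≤ invZeroPowSum k :=
  tsum_nonneg fun _ ↦ by positivity

lemma bernoulli_four : bernoulli 4 = -1 / 30 := by
  rw [bernoulli_eq_bernoulli'_of_ne_one (by decide), bernoulli'_four]

lemma bernoulli_six : bernoulli 6 = 1 / 42 := by
  have h := sum_bernoulli 7
  norm_num [sum_range_succ, Nat.choose, bernoulli_eq_zero_of_odd, Nat.odd_iff, bernoulli_four] at h
  linarith

lemma bernoulli_eight : bernoulli 8 = -1 / 30 := by
  have h := sum_bernoulli 9
  norm_num [sum_range_succ, Nat.choose, bernoulli_eq_zero_of_odd, Nat.odd_iff, bernoulli_four,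
    bernoulli_six] at h
  linarith

lemma bernoulli_ten : bernoulli 10 = 5 / 66 := by
  have h := sum_bernoulli 11
  norm_num [sum_range_succ, Nat.choose, bernoulli_eq_zero_of_odd, Nat.odd_iff, bernoulli_four,
    bernoulli_six, bernoulli_eight] at h
  linarith

lemma invZeroPowSum_one : invZeroPowSum 1 = 1 / 6 := by
  norm_num [invZeroPowSum_eq_bernoulli, bernoulli_two, Nat.factorial]

lemma invZeroPowSum_two : invZeroPowSum 2 = 1 / 90 := by
  norm_num [invZeroPowSum_eq_bernoulli, bernoulli_four, Nat.factorial]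

lemma invZeroPowSum_three : invZeroPowSum 3 = 1 / 945 := by
  norm_num [invZeroPowSum_eq_bernoulli, bernoulli_six, Nat.factorial]

lemma invZeroPowSum_four : invZeroPowSum 4 = 1 / 9450 := by
  norm_num [invZeroPowSum_eq_bernoulli, bernoulli_eight, Nat.factorial]

lemma invZeroPowSum_five : invZeroPowSum 5 = 1 / 93555 := by
  norm_num [invZeroPowSum_eq_bernoulli, bernoulli_ten, Nat.factorial]

lemma invZeroPowSum_succ_le (k : ℕ) : invZeroPowSum (k + 1) ≤ 1 / 6 / π ^ (2 * k) := by
  rw [← invZeroPowSum_one]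
  refine hasSum_le (fun m ↦ ?_) (hasSum_invZeroPowSum k.succ_ne_zero)
    ((hasSum_invZeroPowSum one_ne_zero).div_const _)
  have hπ : π ≤ (m + 1) * π := le_mul_of_one_le_left pi_pos.le (by simp)
  rw [div_div, mul_add_one, pow_add, mul_one, mul_comm (_ ^ (2 * k))]
  gcongr

lemma hasSum_comm_of_nonneg {α β : Type*} {f : α → β → ℝ} {r : α → ℝ} {c : β → ℝ} {s : ℝ}
    (hf : ∀ a b, 0 ≤ f a b) (hr : ∀ a, HasSum (f a) (r a)) (hc : ∀ b, HasSum (f · b) (c b))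
    (hs : HasSum r s) : HasSum c s := by
  have hsum : Summable fun p : α × β ↦ f p.1 p.2 :=
    (summable_prod_of_nonneg fun p ↦ hf p.1 p.2).2
      ⟨fun a ↦ (hr a).summable, by simpa only [(hr _).tsum_eq] using hs.summable⟩
  have htotal : HasSum (fun p : α × β ↦ f p.1 p.2) s :=
    (hsum.hasSum.prod_fiberwise hr).unique hs ▸ hsum.hasSum
  exact ((Equiv.prodComm β α).hasSum_iff.2 htotal).prod_fiberwise hc

lemma tendsto_prod_sinc (θ : ℝ) :
    Tendsto (fun n ↦ ∏ m ∈ range n, (1 - (θ / ((m + 1) * π)) ^ 2)) atTop (𝓝 (sinc θ)) := by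
  rcases eq_or_ne θ 0 with rfl | hθ
  · simp
  have h := (tendsto_euler_sin_prod (θ / π)).div_const θ
  rw [mul_div_cancel₀ _ pi_ne_zero, ← sinc_of_ne_zero hθ] at h
  refine h.congr fun n ↦ ?_
  rw [mul_div_cancel_left₀ _ hθ]
  refine prod_congr rfl fun m _ ↦ ?_
  rw [← div_pow, div_div, mul_comm π]

lemma sinc_pos_of_abs_lt_pi {θ : ℝ} (hθ : |θ| < π) : 0 < sinc θ := by
  rcases eq_or_ne θ 0 with rfl | h0
  · simp
  have habs : sinc θ = sinc |θ| := by
    rcases abs_choice θ with h | h <;> simp [h]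
  have hpos : 0 < |θ| := abs_pos.2 h0
  rw [habs, sinc_of_ne_zero hpos.ne']
  exact div_pos (sin_pos_of_pos_of_lt_pi hpos hθ) hpos

lemma abs_div_succ_mul_pi_lt_one {θ : ℝ} (hθ : |θ| < π) (m : ℕ) : |θ / ((m + 1) * π)| < 1 := by
  have hπ : π ≤ (m + 1) * π := le_mul_of_one_le_left pi_pos.le (by simp)
  rw [abs_div, abs_of_pos (pi_pos.trans_le hπ), div_lt_one (pi_pos.trans_le hπ)]
  exact hθ.trans_le hπ

lemma hasSum_log_sinc {θ : ℝ} (hθ : |θ| < π) :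
    HasSum (fun m : ℕ ↦ -log (1 - (θ / ((m + 1) * π)) ^ 2)) (-log (sinc θ)) := by
  have hsq (m : ℕ) : (θ / ((m + 1) * π)) ^ 2 < 1 :=
    (sq_lt_one_iff_abs_lt_one _).2 (abs_div_succ_mul_pi_lt_one hθ m)
  rw [hasSum_iff_tendsto_nat_of_nonneg fun m ↦ neg_nonneg.2 <|
    log_nonpos (sub_nonneg.2 (hsq m).le) (sub_le_self _ (sq_nonneg _))]
  refine ((tendsto_prod_sinc θ).log (sinc_pos_of_abs_lt_pi hθ).ne').neg.congr fun n ↦ ?_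
  rw [log_prod fun m _ ↦ (sub_pos.2 (hsq m)).ne', sum_neg_distrib]

lemma hasSum_log_sinc_pow {θ : ℝ} (hθ : |θ| < π) :
    HasSum (fun k : ℕ ↦ invZeroPowSum (k + 1) * θ ^ (2 * (k + 1)) / (k + 1)) (-log (sinc θ)) := by
  refine hasSum_comm_of_nonneg (f := fun m k : ℕ ↦ ((θ / ((m + 1) * π)) ^ 2) ^ (k + 1) / (k + 1))
    (fun m k ↦ by positivity) (fun m ↦ ?_) (fun k ↦ ?_) (hasSum_log_sinc hθ)
  · apply hasSum_pow_div_log_of_abs_lt_one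
    rw [abs_sq]
    exact (sq_lt_one_iff_abs_lt_one _).2 (abs_div_succ_mul_pi_lt_one hθ m)
  · convert! ((hasSum_invZeroPowSum k.succ_ne_zero).mul_right (θ ^ (2 * (k + 1)))).div_const
      ((k : ℝ) + 1) using 2 with m
    rw [← pow_mul, div_pow, one_div_mul_eq_div]

/-- The `k`-th term of Milnor's expansion `Λ(θ) = θ (1 - log (2θ)) + ∑ k, lobTerm k θ`, indexed so
that the sum starts at `k = 0`. -/
noncomputable def lobTerm (k : ℕ) (θ : ℝ) : ℝ :=
  invZeroPowSum (k + 1) * θ ^ (2 * k + 3) / ((k + 1) * (2 * k + 3))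

lemma abs_le_of_mem_uIcc_zero {t θ : ℝ} (ht : t ∈ Set.uIcc 0 θ) : |t| ≤ |θ| := by
  simpa only [sub_zero] using Set.abs_sub_left_of_mem_uIcc ht

lemma integral_log_sinc_term (k : ℕ) (θ : ℝ) :
    ∫ t in (0 : ℝ)..θ, invZeroPowSum (k + 1) * t ^ (2 * (k + 1)) / (k + 1) = lobTerm k θ := by
  rw [intervalIntegral.integral_div, intervalIntegral.integral_const_mul, integral_pow, lobTerm,
    zero_pow (by lia)]
  push_cast
  field_simp
  ring

lemma hasSum_lobTerm_integral {θ : ℝ} (hθ : |θ| < π) :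
    HasSum (lobTerm · θ) (-∫ t in (0 : ℝ)..θ, log (sinc t)) := by
  simp only [← integral_log_sinc_term, ← intervalIntegral.integral_neg]
  refine intervalIntegral.hasSum_integral_of_dominated_convergence
    (fun k _ ↦ invZeroPowSum (k + 1) * θ ^ (2 * (k + 1)) / (k + 1))
    (fun k ↦ by fun_prop) (fun k ↦ .of_forall fun t ht ↦ ?_)
    (.of_forall fun _ _ ↦ (hasSum_log_sinc_pow hθ).summable) intervalIntegrable_const
    (.of_forall fun t ht ↦ hasSum_log_sinc_pow <|
      (abs_le_of_mem_uIcc_zero (Set.uIoc_subset_uIcc ht)).trans_lt hθ)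
  have hP := invZeroPowSum_nonneg (k + 1)
  have ht2 : t ^ 2 ≤ θ ^ 2 := sq_le_sq.2 (abs_le_of_mem_uIcc_zero (Set.uIoc_subset_uIcc ht))
  rw [pow_mul, pow_mul, norm_of_nonneg (by positivity)]
  gcongr

lemma log_abs_two_mul_sin {t : ℝ} (h0 : t ≠ 0) (ht : |t| < π) :
    log |2 * sin t| = log 2 + log t + log (sinc t) := by
  have hsinc := (sinc_pos_of_abs_lt_pi ht).ne'
  have hsin : sin t = t * sinc t := by rw [sinc_of_ne_zero h0, mul_div_cancel₀ _ h0]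
  rw [log_abs, hsin, log_mul two_ne_zero (mul_ne_zero h0 hsinc), log_mul h0 hsinc, add_assoc]

lemma lob_eq_sub_integral_log_sinc {θ : ℝ} (hθ : |θ| < π) :
    lob θ = θ * (1 - log (2 * θ)) - ∫ t in (0 : ℝ)..θ, log (sinc t) := by
  have hsinc : IntervalIntegrable (fun t ↦ log (sinc t)) volume 0 θ :=
    (continuous_sinc.continuousOn.log fun t ht ↦ (sinc_pos_of_abs_lt_pi <|
      (abs_le_of_mem_uIcc_zero ht).trans_lt hθ).ne').intervalIntegrable
  have hlog : IntervalIntegrable log volume 0 θ := intervalIntegral.intervalIntegrable_log'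
  have hsplit : ∫ t in (0 : ℝ)..θ, log |2 * sin t| =
      ∫ t in (0 : ℝ)..θ, (log 2 + log t + log (sinc t)) := by
    refine intervalIntegral.integral_congr_ae ?_
    filter_upwards [Measure.ae_ne volume 0] with t h0 ht
    exact log_abs_two_mul_sin h0 ((abs_le_of_mem_uIcc_zero (Set.uIoc_subset_uIcc ht)).trans_lt hθ)
  rw [lob, hsplit, intervalIntegral.integral_add (intervalIntegrable_const.add hlog) hsinc,
    intervalIntegral.integral_add intervalIntegrable_const hlog, integral_log,
    intervalIntegral.integral_const, smul_eq_mul]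
  rcases eq_or_ne θ 0 with rfl | h0
  · simp
  · rw [log_mul two_ne_zero h0]
    ring

theorem hasSum_lobTerm {θ : ℝ} (hθ : |θ| < π) :
    HasSum (lobTerm · θ) (lob θ - θ * (1 - log (2 * θ))) := by
  rw [lob_eq_sub_integral_log_sinc hθ, sub_sub_cancel_left]
  exact hasSum_lobTerm_integral hθ

lemma abs_lobTerm_le (k : ℕ) (θ : ℝ) :
    |lobTerm k θ| ≤ |θ| ^ 3 / 6 * ((θ / π) ^ 2) ^ k / ((k + 1) * (2 * k + 3)) := by
  have hden : (0 : ℝ) < (k + 1) * (2 * k + 3) := by positivity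
  rw [lobTerm, abs_div, abs_mul, abs_of_nonneg (invZeroPowSum_nonneg _), abs_of_pos hden, abs_pow]
  refine div_le_div_of_nonneg_right ?_ hden.le
  calc invZeroPowSum (k + 1) * |θ| ^ (2 * k + 3)
      ≤ 1 / 6 / π ^ (2 * k) * |θ| ^ (2 * k + 3) := by gcongr; exact invZeroPowSum_succ_le k
    _ = |θ| ^ 3 / 6 * ((θ / π) ^ 2) ^ k := by
      rw [pow_add, pow_mul |θ|, sq_abs, div_pow, div_pow, ← pow_mul π]
      ring

/-- The truncation of Milnor's expansion of `Λ(θ)` after `N` terms of its power series part. -/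
noncomputable def lobPartial (N : ℕ) (θ : ℝ) : ℝ :=
  θ * (1 - log (2 * θ)) + ∑ k ∈ range N, lobTerm k θ

theorem abs_lob_sub_lobPartial_le {θ : ℝ} (hθ : |θ| < π) (N : ℕ) :
    |lob θ - lobPartial N θ| ≤
      |θ| ^ 3 / 6 * ((θ / π) ^ 2) ^ N / ((N + 1) * (2 * N + 3)) * (1 - (θ / π) ^ 2)⁻¹ := by
  have hq : (θ / π) ^ 2 < 1 := by
    rw [sq_lt_one_iff_abs_lt_one, abs_div, abs_of_pos pi_pos]
    exact (div_lt_one pi_pos).2 hθ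
  rw [lobPartial, ← sub_sub]
  refine ((hasSum_nat_add_iff' N).2 (hasSum_lobTerm hθ)).norm_le_of_bounded
    ((hasSum_geometric_of_lt_one (sq_nonneg _) hq).mul_left _) fun k ↦ ?_
  calc |lobTerm (k + N) θ|
      ≤ |θ| ^ 3 / 6 * ((θ / π) ^ 2) ^ (k + N) / (((k + N : ℕ) + 1) * (2 * (k + N : ℕ) + 3)) :=
        abs_lobTerm_le _ _
    _ ≤ |θ| ^ 3 / 6 * ((θ / π) ^ 2) ^ (k + N) / ((N + 1) * (2 * N + 3)) := by
        gcongr <;> lia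
    _ = |θ| ^ 3 / 6 * ((θ / π) ^ 2) ^ N / ((N + 1) * (2 * N + 3)) * ((θ / π) ^ 2) ^ k := by
        rw [pow_add]
        ring

lemma sum_lobTerm_range_five (θ : ℝ) :
    ∑ k ∈ range 5, lobTerm k θ =
      θ ^ 3 / 18 + θ ^ 5 / 900 + θ ^ 7 / 19845 + θ ^ 9 / 340200 + θ ^ 11 / 5145525 := by
  simp only [sum_range_succ, sum_range_zero, lobTerm, Nat.reduceAdd, invZeroPowSum_one,
    invZeroPowSum_two, invZeroPowSum_three, invZeroPowSum_four, invZeroPowSum_five]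
  push_cast
  ring

lemma pi_div_three_mem_Ioo : π / 3 ∈ Set.Ioo (1.04719755119 : ℝ) 1.0471975512 := by
  constructor <;> linarith [pi_gt_d20, pi_lt_d20]

-- The arguments of the `log ((1 + x) / (1 - x))` series are the roundings of
-- `(π / 3 - 1) / (π / 3 + 1)`.
lemma log_pi_div_three_mem_Icc : log (π / 3) ∈ Set.Icc (0.04611759 : ℝ) 0.0461176 := by
  obtain ⟨hlo, hhi⟩ := pi_div_three_mem_Ioo
  constructor
  · calc (0.04611759 : ℝ)
        ≤ log ((1 + 0.0230547126) / (1 - 0.0230547126)) := by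
          have h := sum_range_le_log_div (x := 0.0230547126) (by norm_num) (by norm_num) 3
          norm_num [sum_range_succ] at h ⊢
          linarith
      _ ≤ log (π / 3) := log_le_log (by norm_num) (le_trans (by norm_num) hlo.le)
  · calc log (π / 3)
        ≤ log ((1 + 0.0230547127) / (1 - 0.0230547127)) :=
          log_le_log (by positivity) (hhi.le.trans (by norm_num))
      _ ≤ 0.0461176 := by
          have h := log_div_le_sum_range_add (x := 0.0230547127) (by norm_num) (by norm_num) 3
          norm_num [sum_range_succ] at h ⊢
          linarith

lemma abs_three_mul_lob_pi_div_three_sub_le :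
    |3 * lob (π / 3) - 3 * lobPartial 5 (π / 3)| ≤ 2 / 10 ^ 7 := by
  have hlt : |π / 3| < π := by
    rw [abs_of_pos (by positivity)]
    exact div_lt_self pi_pos (by norm_num)
  have hcube : |π / 3| ^ 3 ≤ 1.0471975512 ^ 3 := by
    rw [abs_of_pos (by positivity)]
    gcongr
    exact pi_div_three_mem_Ioo.2.le
  have hq : (π / 3 / π) ^ 2 = 1 / 9 := by
    rw [div_div_cancel_left' pi_ne_zero]
    norm_num
  have h := abs_lob_sub_lobPartial_le hlt 5
  rw [hq] at h
  rw [← mul_sub, abs_mul, abs_of_pos three_pos]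
  norm_num at h hcube ⊢
  linarith

lemma abs_three_mul_lobPartial_pi_div_three_sub_le :
    |3 * lobPartial 5 (π / 3) - 1.014941| ≤ 7 / 10 ^ 7 := by
  have hpos : 0 < π / 3 := by positivity
  have hb := pi_div_three_mem_Ioo
  have hlog := log_pi_div_three_mem_Icc
  have hlog2 : log 2 ∈ Set.Ioo (0.6931471803 : ℝ) 0.6931471808 := ⟨log_two_gt_d9, log_two_lt_d9⟩
  rw [lobPartial, sum_lobTerm_range_five, log_mul two_ne_zero hpos.ne']
  generalize π / 3 = b at *
  have hpow_lo (n : ℕ) : 1.04719755119 ^ n ≤ b ^ n := by gcongr; exact hb.1.le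
  have hpow_hi (n : ℕ) : b ^ n ≤ 1.0471975512 ^ n := by gcongr; exact hb.2.le
  have hmain_lo : 1.04719755119 * (1 - (0.6931471808 + 0.0461176)) ≤
      b * (1 - (log 2 + log b)) := by
    apply mul_le_mul hb.1.le _ (by norm_num) hpos.le
    linarith [hlog2.2, hlog.2]
  have hmain_hi : b * (1 - (log 2 + log b)) ≤
      1.0471975512 * (1 - (0.6931471803 + 0.04611759)) := by
    apply mul_le_mul hb.2.le _ _ (by norm_num) <;> linarith [hlog2.1, hlog2.2, hlog.1, hlog.2]
  rw [abs_le]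
  constructor
  · linarith [hpow_lo 3, hpow_lo 5, hpow_lo 7, hpow_lo 9, hpow_lo 11]
  · linarith [hpow_hi 3, hpow_hi 5, hpow_hi 7, hpow_hi 9, hpow_hi 11]

/-- The volume `v_tet = 3Λ(π/3)` of the regular ideal tetrahedron satisfies
`|3Λ(π/3) − 1.014941| < 10⁻⁶`. -/
theorem vtet_approx : |3 * lob (Real.pi / 3) - 1.014941| < 1 / 1000000 := by
  calc |3 * lob (Real.pi / 3) - 1.014941|
      ≤ 2 / 10 ^ 7 + 7 / 10 ^ 7 := (abs_sub_le _ _ _).trans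
        (add_le_add abs_three_mul_lob_pi_div_three_sub_le
          abs_three_mul_lobPartial_pi_div_three_sub_le)
    _ < 1 / 1000000 := by norm_num
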